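/- Let p and q be coprime positive integers. For each cube root of unity ζ ∈ {1, ω, ω²} (ω = e^{2πi/3}), let f(p, ζ) denote the number of SU(3)-conjugacy classes of matrices A ∈ SU(3) with A^p = ζ·I having three pairwise distinct eigenvalues, and let g(p, ζ) denote the number of SU(3)-conjugacy classes of A ∈ SU(3) with A^p = ζ·I having exactly two distinct eigenvalues. Then, as integers, 2·Σ_{ζ³=1} ( f(p, ζ)·g(q, ζ) + g(p, ζ)·f(q, ζ) ) = (p−1)·(q−1)·(p+q−4). (This sum is the number N_I of two-dimensional components of the irreducible SU(3) representation variety of the knot complement Z, so N_I = (p−1)(q−1)(p+q−4)/2.) -/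

import Mathlib

/-!
The `SU(3)`-conjugacy class of a matrix `A` with `A ^ p = ζ • 1` is determined by its multiset of
eigenvalues (`numConjClasses_eq`): such an `A` is unitarily diagonalizable
(`exists_unitary_diagonalization`), matrices with the same eigenvalues are conjugate by a unitary
matrix (`exists_unitary_conj`), and that matrix can be rescaled to determinant `1`
(`exists_SU_conj`). The multisets that occur are `{a, b, c}` with `a * b * c = 1` and all of `a`,
`b`, `c` among the `p` roots of `x ^ p = ζ`.

Let `s(p, ζ)` be the number of cube roots of unity `a` with `a ^ p = ζ`. Two-valued multisets are
`{a, a, a⁻²}` with `a ^ 3 ≠ 1`, so `g(p, ζ) = p - s(p, ζ)` (`countTwo_eq`). The pair `(a, b)` is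
arbitrary and determines `c`, since `ζ ^ 3 = 1`; discarding the pairs with a coincidence among
`a`, `b`, `c` and dividing by the six orderings gives `6 * f(p, ζ) = p² - 3 * p + 2 * s(p, ζ)`
(`six_mul_countThree_eq`).

Finally `∑ s(p, ζ) = 3` over the three values of `ζ`, and `s(q, ζ) = 1` for every `ζ` if `3 ∤ q`. As
`p` and `q` are coprime, `3` fails to divide one of them, and the sum evaluates to the claim
(`count_aux`).
-/

open Matrix in
/-- The special unitary group `SU(n)` of `n × n` complex matrices with determinant `1`,
as a subgroup of the unitary group. -/
noncomputable def SU (n : ℕ) : Subgroup (Matrix.unitaryGroup (Fin n) ℂ) where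
  carrier := {A | (A : Matrix (Fin n) (Fin n) ℂ).det = 1}
  one_mem' := by simp
  mul_mem' := by
    intro a b ha hb
    show ((a * b : Matrix.unitaryGroup (Fin n) ℂ) : Matrix (Fin n) (Fin n) ℂ).det = 1
    rw [Submonoid.coe_mul, Matrix.det_mul]
    rw [Set.mem_setOf_eq] at ha hb
    rw [ha, hb, mul_one]
  inv_mem' := by
    intro a ha
    show ((a⁻¹ : Matrix.unitaryGroup (Fin n) ℂ) : Matrix (Fin n) (Fin n) ℂ).det = 1
    rw [Set.mem_setOf_eq] at ha
    have : ((a⁻¹ : Matrix.unitaryGroup (Fin n) ℂ) : Matrix (Fin n) (Fin n) ℂ)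
        = star (a : Matrix (Fin n) (Fin n) ℂ) := rfl
    rw [this]
    show (Matrix.conjTranspose _).det = 1
    rw [Matrix.det_conjTranspose, ha, star_one]

/-- The underlying matrix of an element of `SU(n)`. -/
noncomputable abbrev matSU {n : ℕ} (A : SU n) : Matrix (Fin n) (Fin n) ℂ := A.val.val

/-- The number of conjugacy classes of a conjugation-invariant subset `S` of `SU(3)`:
the cardinality of the quotient of `S` by `A ∼ U·A·U⁻¹` for `U ∈ SU(3)`. -/
noncomputable def numConjClasses (S : Set (SU 3)) : ℕ :=
  Nat.card (Quotient (Setoid.mk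
    (fun A B : S => ∃ U : SU 3, (B : SU 3) = U * (A : SU 3) * U⁻¹)
    (by
      constructor
      · intro A; exact ⟨1, by group⟩
      · rintro A B ⟨U, hU⟩; exact ⟨U⁻¹, by rw [hU]; group⟩
      · rintro A B C ⟨U, hU⟩ ⟨V, hV⟩; exact ⟨V * U, by rw [hV, hU]; group⟩)))

/-- The cube root of unity `ω = e^{2πi/3}`. -/
noncomputable def omega3 : ℂ := Complex.exp (2 * Real.pi * Complex.I / 3)

/-- `f(p, ζ)`: the number of `SU(3)`-conjugacy classes of matrices `A ∈ SU(3)` with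
`A^p = ζ·I` having three pairwise distinct eigenvalues. -/
noncomputable def countThree (p : ℕ) (ζ : ℂ) : ℕ :=
  numConjClasses {A : SU 3 | matSU A ^ p = ζ • (1 : Matrix (Fin 3) (Fin 3) ℂ) ∧
    (spectrum ℂ (matSU A)).ncard = 3}

/-- `g(p, ζ)`: the number of `SU(3)`-conjugacy classes of matrices `A ∈ SU(3)` with
`A^p = ζ·I` having exactly two distinct eigenvalues. -/
noncomputable def countTwo (p : ℕ) (ζ : ℂ) : ℕ :=
  numConjClasses {A : SU 3 | matSU A ^ p = ζ • (1 : Matrix (Fin 3) (Fin 3) ℂ) ∧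
    (spectrum ℂ (matSU A)).ncard = 2}

/-! ### Roots of `ζ` -/

/-- The finite set of complex `p`-th roots of `ζ`, meaningful for `0 < p`. -/
noncomputable def rootSet (p : ℕ) (ζ : ℂ) : Finset ℂ := (Polynomial.nthRoots p ζ).toFinset

lemma mem_rootSet {p : ℕ} (hp : 0 < p) {ζ a : ℂ} : a ∈ rootSet p ζ ↔ a ^ p = ζ := by
  simp [rootSet, Polynomial.mem_nthRoots hp]

lemma card_rootSet {p : ℕ} (hp : 0 < p) {ζ : ℂ} (hζ : ζ ≠ 0) : (rootSet p ζ).card = p := by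
  have h := Complex.isPrimitiveRoot_exp p hp.ne'
  obtain ⟨a, ha⟩ := IsAlgClosed.exists_pow_nat_eq ζ hp
  rw [rootSet, Multiset.toFinset_card_of_nodup (h.nthRoots_nodup hζ), h.card_nthRoots,
    if_pos ⟨a, ha⟩]

/-! ### Unitary diagonalization and conjugacy in `SU(3)` -/

open scoped Matrix in
/-- A unitary matrix with `A ^ p = ζ • 1` is unitarily diagonalizable: `X ^ p - ζ` is squarefree, so
the eigenspaces span, and eigenspaces of a unitary map for distinct eigenvalues are orthogonal. -/
lemma exists_unitary_diagonalization {n p : ℕ} (hp : 0 < p) {ζ : ℂ} (hζ : ζ ≠ 0)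
    (A : Matrix.unitaryGroup (Fin n) ℂ)
    (hA : (A : Matrix (Fin n) (Fin n) ℂ) ^ p = ζ • (1 : Matrix (Fin n) (Fin n) ℂ)) :
    ∃ (U : Matrix.unitaryGroup (Fin n) ℂ) (d : Fin n → ℂ),
      A.val = U.val * Matrix.diagonal d * star U.val := by
  classical
  let T : Module.End ℂ (EuclideanSpace ℂ (Fin n)) :=
    Matrix.toLinAlgEquiv (PiLp.basisFun 2 ℂ (Fin n)) A.val
  have hTapp : ∀ v, T v = WithLp.toLp 2 (A.val *ᵥ v.ofLp) := by
    intro v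
    rfl
  have hss : T.IsSemisimple := by
    refine Module.End.isSemisimple_of_squarefree_aeval_eq_zero
      (p := Polynomial.X ^ p - Polynomial.C ζ) ?_ ?_
    · exact (Polynomial.separable_X_pow_sub_C ζ (by exact_mod_cast hp.ne') hζ).squarefree
    · simp only [map_sub, map_pow, Polynomial.aeval_X, Polynomial.aeval_C, T]
      rw [← map_pow, hA, map_smul, map_one, Algebra.algebraMap_eq_smul_one, sub_self]
  have hinner : ∀ v w, inner ℂ (T v) (T w) = inner ℂ v w := by
    intro v w
    rw [hTapp, hTapp, EuclideanSpace.inner_eq_star_dotProduct,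
      EuclideanSpace.inner_eq_star_dotProduct]
    simp only [Matrix.star_mulVec]
    rw [dotProduct_comm, ← Matrix.dotProduct_mulVec, Matrix.mulVec_mulVec,
      ← Matrix.star_eq_conjTranspose, Unitary.coe_star_mul_self, Matrix.one_mulVec,
      dotProduct_comm]
  have horth : OrthogonalFamily ℂ (fun μ : Module.End.Eigenvalues T => T.eigenspace (μ : ℂ))
      fun μ => (T.eigenspace (μ : ℂ)).subtypeₗᵢ := by
    rintro ⟨μ, hμ⟩ ⟨ν, hν⟩ hne ⟨v, hv⟩ ⟨w, hw⟩
    have hne' : μ ≠ ν := fun h => hne (Subtype.ext h)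
    show inner ℂ v w = 0
    by_cases hv0 : v = 0
    · simp [hv0]
    rw [Module.End.mem_eigenspace_iff] at hv hw
    have h1 := hinner v v
    have h2 := hinner v w
    simp only [Module.End.UnifEigenvalues.val] at hv hw
    rw [hv, inner_smul_left, inner_smul_right] at h1
    rw [hv, hw, inner_smul_left, inner_smul_right] at h2
    have hvv : inner ℂ v v ≠ 0 := by simpa using hv0
    have h3 : (starRingEnd ℂ) μ * μ = 1 := by
      apply mul_right_cancel₀ hvv
      linear_combination h1
    by_contra hvw
    have h4 : (starRingEnd ℂ) μ * ν = 1 := by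
      apply mul_right_cancel₀ hvw
      linear_combination h2
    have h5 : (starRingEnd ℂ) μ ≠ 0 := left_ne_zero_of_mul_eq_one h3
    exact hne' (mul_left_cancel₀ h5 (h3.trans h4.symm))
  have htop : (⨆ μ : Module.End.Eigenvalues T, T.eigenspace (μ : ℂ)) = ⊤ := by
    have := hss.iSup_eigenspace_eq_top
    rw [← this]
    exact iSup_ne_bot_subtype (fun μ => T.eigenspace μ)
  have hint : DirectSum.IsInternal fun μ : Module.End.Eigenvalues T => T.eigenspace (μ : ℂ) :=
    horth.isInternal_iff.mpr (by rw [htop, Submodule.top_orthogonal_eq_bot])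
  have hn : Module.finrank ℂ (EuclideanSpace ℂ (Fin n)) = n := by simp
  let b := hint.subordinateOrthonormalBasis hn horth
  let d : Fin n → ℂ := fun i => (hint.subordinateOrthonormalBasisIndex hn i horth).val
  have hb : ∀ i, A.val *ᵥ (b i).ofLp = d i • (b i).ofLp := by
    intro i
    have h := hint.subordinateOrthonormalBasis_subordinate hn i horth
    rw [Module.End.mem_eigenspace_iff, hTapp] at h
    exact congrArg WithLp.ofLp h
  let U : Matrix.unitaryGroup (Fin n) ℂ :=
    ⟨(EuclideanSpace.basisFun (Fin n) ℂ).toBasis.toMatrix b.toBasis,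
      (EuclideanSpace.basisFun (Fin n) ℂ).toMatrix_orthonormalBasis_mem_unitary b⟩
  have hU : ∀ i j, U.val i j = (b j).ofLp i := fun i j => by
    simp [U, Module.Basis.toMatrix_apply]
  have hAU : A.val * U.val = U.val * Matrix.diagonal d := by
    ext i j
    rw [Matrix.mul_diagonal, Matrix.mul_apply]
    have := congrFun (hb j) i
    simp only [Matrix.mulVec, dotProduct, Pi.smul_apply, smul_eq_mul] at this
    simp only [hU]
    rw [this, mul_comm]
  refine ⟨U, d, ?_⟩
  rw [← hAU, mul_assoc, Matrix.mem_unitaryGroup_iff.1 U.2, mul_one]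

lemma roots_charpoly_conj_diagonal {n : ℕ} (U : Matrix.unitaryGroup (Fin n) ℂ) (d : Fin n → ℂ) :
    (U.val * Matrix.diagonal d * star U.val).charpoly.roots = Finset.univ.val.map d := by
  rw [Matrix.charpoly_mul_comm, ← mul_assoc, Unitary.coe_star_mul_self, one_mul,
    Matrix.charpoly_diagonal, Polynomial.roots_prod]
  · simp
  · simp [Finset.prod_ne_zero_iff, Polynomial.X_sub_C_ne_zero]

lemma exists_perm_of_map_eq {n : ℕ} {d e : Fin n → ℂ}
    (h : Finset.univ.val.map d = Finset.univ.val.map e) : ∃ σ : Equiv.Perm (Fin n), e = d ∘ σ := by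
  -- equal multisets of values have fibres of equal size, and bijections of fibres glue
  have hcard : ∀ y : ℂ, Nonempty ({i // e i = y} ≃ {i // d i = y}) := by
    intro y
    refine ⟨Fintype.equivOfCardEq ?_⟩
    have h' := congrArg (Multiset.count y) h
    rw [Multiset.count_map, Multiset.count_map] at h'
    rw [Fintype.card_subtype, Fintype.card_subtype]
    simp only [eq_comm (a := y)] at h'
    exact h'.symm
  let f := fun y => (hcard y).some
  refine ⟨(Equiv.sigmaFiberEquiv e).symm.trans
    ((Equiv.sigmaCongrRight f).trans (Equiv.sigmaFiberEquiv d)), funext fun i => ?_⟩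
  exact ((f (e i)) ⟨i, rfl⟩).2.symm

/-- Conjugacy under the full unitary group implies conjugacy under `SU(3)`: divide the conjugating
matrix by a cube root of its determinant. -/
lemma exists_SU_conj {A B : SU 3} {V : Matrix.unitaryGroup (Fin 3) ℂ}
    (h : B.val = V * A.val * V⁻¹) : ∃ U : SU 3, B = U * A * U⁻¹ := by
  obtain ⟨c, hc⟩ := IsAlgClosed.exists_pow_nat_eq (V.val.det)⁻¹ (n := 3) (by norm_num)
  have hdet : ‖V.val.det‖ = 1 := by
    have := Matrix.det_of_mem_unitary V.2
    exact CStarRing.norm_of_mem_unitary this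
  have hV0 : V.val.det ≠ 0 := by
    intro h0
    simp [h0] at hdet
  have hcn : ‖c‖ = 1 := by
    have h3 := congrArg norm hc
    rw [norm_pow, norm_inv, hdet, inv_one] at h3
    exact (pow_eq_one_iff_of_nonneg (norm_nonneg c) (by norm_num)).1 h3
  have hcc : star c * c = 1 := by
    have := Complex.conj_mul' c
    simpa [hcn] using this
  let W : Matrix.unitaryGroup (Fin 3) ℂ := ⟨c • V.val, by
    rw [Matrix.mem_unitaryGroup_iff', star_smul, smul_mul_smul_comm, hcc,
      Unitary.coe_star_mul_self, one_smul]⟩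
  refine ⟨⟨W, ?_⟩, ?_⟩
  · show (c • V.val).det = 1
    rw [Matrix.det_smul, Fintype.card_fin, hc, inv_mul_cancel₀ hV0]
  · apply Subtype.ext
    rw [h]
    apply Subtype.ext
    show V.val * A.val.val * star V.val = (c • V.val) * A.val.val * star (c • V.val)
    rw [star_smul, smul_mul_assoc, smul_mul_smul_comm, mul_comm, hcc, one_smul]

/-- Unitarily diagonalized matrices with the same multiset of eigenvalues are unitarily conjugate,
via a permutation matrix between the two diagonal forms. -/
lemma exists_unitary_conj {n : ℕ} {A B U V : Matrix.unitaryGroup (Fin n) ℂ} {d e : Fin n → ℂ}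
    (hA : A.val = U.val * Matrix.diagonal d * star U.val)
    (hB : B.val = V.val * Matrix.diagonal e * star V.val)
    (h : Finset.univ.val.map d = Finset.univ.val.map e) :
    ∃ W : Matrix.unitaryGroup (Fin n) ℂ, B = W * A * W⁻¹ := by
  obtain ⟨σ, rfl⟩ := exists_perm_of_map_eq h
  let P : Matrix.unitaryGroup (Fin n) ℂ := ⟨σ.permMatrix ℂ, by
    rw [Matrix.mem_unitaryGroup_iff, Matrix.star_eq_conjTranspose,
      Matrix.conjTranspose_permMatrix, ← Matrix.permMatrix_mul]
    simp⟩
  have hP : P.val * Matrix.diagonal d * star P.val = Matrix.diagonal (d ∘ σ) := by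
    have : P.val * Matrix.diagonal d = Matrix.diagonal (d ∘ σ) * P.val := by
      ext i j
      rw [Matrix.mul_diagonal, Matrix.diagonal_mul]
      by_cases hij : σ i = j
      · subst hij
        simp [P, Equiv.Perm.permMatrix, Equiv.toPEquiv_apply, mul_comm]
      · simp [P, Equiv.Perm.permMatrix, PEquiv.toMatrix_apply, Equiv.toPEquiv_apply, hij]
    rw [this, mul_assoc, Matrix.mem_unitaryGroup_iff.1 P.2, mul_one]
  refine ⟨V * P * U⁻¹, ?_⟩
  have hA' : Matrix.diagonal d = star U.val * A.val * U.val := by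
    rw [hA]
    simp only [← mul_assoc, Unitary.coe_star_mul_self, one_mul]
    rw [mul_assoc, Unitary.coe_star_mul_self, mul_one]
  apply Subtype.ext
  rw [hB, ← hP, hA']
  have : (V * P * U⁻¹ * A * (V * P * U⁻¹)⁻¹) = V * (P * (U⁻¹ * A * U) * P⁻¹) * V⁻¹ := by group
  rw [this]
  rfl

/-- The multisets of eigenvalues, with multiplicity, of the matrices `A ∈ SU(3)` with `A ^ p = ζ • 1`
and exactly `k` distinct eigenvalues. -/
def eigenMultisets (p : ℕ) (ζ : ℂ) (k : ℕ) : Set (Multiset ℂ) :=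
  {m | m.card = 3 ∧ m.prod = 1 ∧ (∀ a ∈ m, a ^ p = ζ) ∧ m.toFinset.card = k}

lemma roots_mem {p : ℕ} (hp : 0 < p) {ζ : ℂ} (hζ : ζ ≠ 0) (k : ℕ) (A : SU 3)
    (hA : matSU A ^ p = ζ • (1 : Matrix (Fin 3) (Fin 3) ℂ))
    (hk : (spectrum ℂ (matSU A)).ncard = k) :
    (matSU A).charpoly.roots ∈ eigenMultisets p ζ k := by
  obtain ⟨U, d, hd⟩ := exists_unitary_diagonalization hp hζ A.val hA
  have hroots : (matSU A).charpoly.roots = Finset.univ.val.map d := by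
    rw [matSU, hd, roots_charpoly_conj_diagonal]
  refine ⟨by simp [hroots], ?_, ?_, ?_⟩
  · rw [← Matrix.det_eq_prod_roots_charpoly]
    exact A.2
  · have hpow : Matrix.diagonal d ^ p = ζ • (1 : Matrix (Fin 3) (Fin 3) ℂ) := by
      have hconj : ∀ j : ℕ, (U.val * Matrix.diagonal d * star U.val) ^ j
          = U.val * Matrix.diagonal d ^ j * star U.val := by
        intro j
        induction j with
        | zero => simp
        | succ j ih =>
          rw [pow_succ, ih, pow_succ]
          simp only [mul_assoc]
          rw [← mul_assoc (star U.val) U.val, Unitary.coe_star_mul_self, one_mul]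
      rw [matSU, hd, hconj] at hA
      have h2 := congrArg (fun M => star U.val * M * U.val) hA
      simp only [mul_assoc, Unitary.coe_star_mul_self, mul_one] at h2
      rw [← mul_assoc, Unitary.coe_star_mul_self, one_mul] at h2
      simpa using h2
    intro a ha
    rw [hroots] at ha
    obtain ⟨i, -, rfl⟩ := Multiset.mem_map.1 ha
    rw [Matrix.diagonal_pow] at hpow
    simpa using congrFun (congrFun hpow i) i
  · rw [← hk, ← Set.ncard_coe_finset]
    congr 1
    ext a
    rw [Matrix.mem_spectrum_iff_isRoot_charpoly]
    simp [(Matrix.charpoly_monic _).ne_zero]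

/-- Conjugacy classes are classified by the multiset of eigenvalues, and each admissible multiset is
realized by a diagonal matrix. -/
lemma numConjClasses_eq {p : ℕ} (hp : 0 < p) {ζ : ℂ} (hζ : ‖ζ‖ = 1) (k : ℕ) :
    numConjClasses {A : SU 3 | matSU A ^ p = ζ • (1 : Matrix (Fin 3) (Fin 3) ℂ) ∧
      (spectrum ℂ (matSU A)).ncard = k} = (eigenMultisets p ζ k).ncard := by
  have hζ0 : ζ ≠ 0 := by
    rintro rfl
    simp at hζ
  rw [numConjClasses, ← Nat.card_coe_set_eq]
  refine Nat.card_congr (Equiv.ofBijective (Quotient.lift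
    (fun A => (⟨(matSU A.1).charpoly.roots, roots_mem hp hζ0 k A.1 A.2.1 A.2.2⟩ :
      eigenMultisets p ζ k)) ?_) ⟨?_, ?_⟩)
  · rintro A B ⟨U, hU⟩
    apply Subtype.ext
    show (matSU A.1).charpoly.roots = (matSU B.1).charpoly.roots
    rw [hU]
    show _ = (U.val.val * A.1.val.val * star U.val.val).charpoly.roots
    rw [Matrix.charpoly_mul_comm, ← mul_assoc, Unitary.coe_star_mul_self, one_mul]
  · intro x y
    induction x using Quotient.inductionOn with | _ A
    induction y using Quotient.inductionOn with | _ B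
    intro h
    have h' : (matSU A.1).charpoly.roots = (matSU B.1).charpoly.roots := congrArg Subtype.val h
    obtain ⟨U, d, hd⟩ := exists_unitary_diagonalization hp hζ0 A.1.val A.2.1
    obtain ⟨V, e, he⟩ := exists_unitary_diagonalization hp hζ0 B.1.val B.2.1
    rw [matSU, matSU, hd, he, roots_charpoly_conj_diagonal, roots_charpoly_conj_diagonal] at h'
    obtain ⟨W, hW⟩ := exists_unitary_conj hd he h'
    exact Quotient.sound (exists_SU_conj hW)
  · rintro ⟨m, hm⟩
    obtain ⟨h3, hprod, hpow, hk⟩ := id hm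
    obtain ⟨a, b, c, rfl⟩ := Multiset.card_eq_three.1 h3
    have hmap : Finset.univ.val.map ![a, b, c] = {a, b, c} := by
      rw [Fin.univ_val_map]
      rfl
    have hd : ∀ i, ![a, b, c] i ^ p = ζ := by
      intro i
      apply hpow
      rw [← hmap]
      exact Multiset.mem_map_of_mem _ (Finset.mem_univ_val i)
    have hnorm : ∀ i, ‖![a, b, c] i‖ = 1 := by
      intro i
      have := congrArg norm (hd i)
      rw [norm_pow, hζ] at this
      exact (pow_eq_one_iff_of_nonneg (norm_nonneg _) hp.ne').1 this
    let D : Matrix.unitaryGroup (Fin 3) ℂ := ⟨Matrix.diagonal ![a, b, c], by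
      rw [Matrix.mem_unitaryGroup_iff', Matrix.star_eq_conjTranspose,
        Matrix.diagonal_conjTranspose, Matrix.diagonal_mul_diagonal, ← Matrix.diagonal_one]
      congr 1
      funext i
      have := Complex.conj_mul' (![a, b, c] i)
      rw [hnorm i] at this
      simpa using this⟩
    have hDdet : D.val.det = 1 := by
      show (Matrix.diagonal ![a, b, c]).det = 1
      rw [Matrix.det_diagonal, Fin.prod_univ_three]
      simpa [mul_assoc] using hprod
    have hroots : (Matrix.diagonal ![a, b, c]).charpoly.roots = {a, b, c} := by
      have := roots_charpoly_conj_diagonal 1 ![a, b, c]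
      rw [hmap] at this
      simpa using this
    refine ⟨Quotient.mk _ ⟨⟨D, hDdet⟩, ?_, ?_⟩, ?_⟩
    · show Matrix.diagonal ![a, b, c] ^ p = _
      rw [Matrix.diagonal_pow, ← Matrix.diagonal_one, ← Matrix.diagonal_smul]
      congr 1
      funext i
      simpa using hd i
    · show (spectrum ℂ (Matrix.diagonal ![a, b, c])).ncard = k
      rw [← hk, ← Set.ncard_coe_finset, ← hroots]
      congr 1
      ext x
      rw [Matrix.mem_spectrum_iff_isRoot_charpoly]
      simp [(Matrix.charpoly_monic _).ne_zero]
    · exact Subtype.ext hroots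

/-! ### Counting eigenvalue multisets -/

lemma ne_zero_of_pow_eq {p : ℕ} (hp : 0 < p) {ζ a : ℂ} (hζ : ζ ^ 3 = 1) (ha : a ^ p = ζ) :
    a ≠ 0 := by
  rintro rfl
  rw [zero_pow hp.ne'] at ha
  simp [← ha] at hζ

lemma eq_inv_iff_mul_eq_one_of_ne_zero {x y : ℂ} (hy : y ≠ 0) : x = y⁻¹ ↔ x * y = 1 :=
  ⟨by rintro rfl; exact inv_mul_cancel₀ hy, eq_inv_of_mul_eq_one_left⟩

/-- If two eigenvalues of a determinant-one matrix are `p`-th roots of `ζ`, so is the third: its `p`-th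
power is `ζ⁻² = ζ`. -/
lemma mem_rootSet_third {p : ℕ} (hp : 0 < p) {ζ a b : ℂ} (hζ : ζ ^ 3 = 1)
    (ha : a ∈ rootSet p ζ) (hb : b ∈ rootSet p ζ) : (a * b)⁻¹ ∈ rootSet p ζ := by
  rw [mem_rootSet hp] at *
  rw [inv_pow, mul_pow, ha, hb]
  apply inv_eq_of_mul_eq_one_right
  rw [← hζ]
  ring

/-- A multiset with two distinct values is `{a, a, a⁻²}` for a unique `a`, and `a ≠ a⁻²` means
`a ^ 3 ≠ 1`. -/
lemma ncard_eigenMultisets_two {p : ℕ} (hp : 0 < p) {ζ : ℂ} (hζ : ζ ^ 3 = 1) :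
    (eigenMultisets p ζ 2).ncard = ((rootSet p ζ).filter fun a => a ^ 3 ≠ 1).card := by
  classical
  have hne : ∀ a : ℂ, a ^ p = ζ → a ≠ 0 := fun a => ne_zero_of_pow_eq hp hζ
  have himg : eigenMultisets p ζ 2 = Set.image
      (fun a : ℂ => ({a, a, (a * a)⁻¹} : Multiset ℂ))
      ((rootSet p ζ).filter fun a => a ^ 3 ≠ 1 : Finset ℂ) := by
    ext m
    simp only [Set.mem_image, Finset.coe_filter, Set.mem_ofPred_eq, mem_rootSet hp]
    constructor
    · rintro ⟨h3, hprod, hpow, hk⟩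
      obtain ⟨a, b, c, rfl⟩ := Multiset.card_eq_three.1 h3
      have key : ∀ x y : ℂ, x * x * y = 1 → x ^ p = ζ → x ≠ y →
          (x ^ p = ζ ∧ x ^ 3 ≠ 1) ∧ ({x, x, (x * x)⁻¹} : Multiset ℂ) = {x, x, y} := by
        intro x y hxy hx hxney
        have h0 := hne x hx
        refine ⟨⟨hx, fun h => hxney ?_⟩, ?_⟩
        · apply mul_left_cancel₀ (mul_ne_zero h0 h0)
          rw [hxy, ← h]
          ring
        · rw [inv_eq_of_mul_eq_one_right hxy]
      simp only [Multiset.insert_eq_cons, Multiset.prod_cons, Multiset.prod_singleton] at hprod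
      simp only [Multiset.insert_eq_cons, Multiset.mem_cons, Multiset.mem_singleton,
        forall_eq_or_imp, forall_eq] at hpow
      simp only [Multiset.insert_eq_cons, Multiset.toFinset_cons, Multiset.toFinset_singleton] at hk
      by_cases hab : a = b
      · subst hab
        refine ⟨a, key a c (by rw [mul_assoc]; exact hprod) hpow.1 ?_⟩
        rintro rfl
        simp at hk
      by_cases hac : a = c
      · subst hac
        have := key a b (by linear_combination hprod) hpow.1 hab
        refine ⟨a, this.1, this.2.trans ?_⟩
        simp only [Multiset.insert_eq_cons]
        rw [Multiset.cons_swap a a, ← Multiset.cons_zero, ← Multiset.cons_zero,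
          Multiset.cons_swap a b]
      by_cases hbc : b = c
      · subst hbc
        have := key b a (by linear_combination hprod) hpow.2.1 (Ne.symm hab)
        refine ⟨b, this.1, this.2.trans ?_⟩
        simp only [Multiset.insert_eq_cons]
        rw [← Multiset.cons_zero, ← Multiset.cons_zero, Multiset.cons_swap b a,
          Multiset.cons_swap b a]
      exfalso
      rw [Finset.card_insert_of_notMem (by simp [hab, hac]),
        Finset.card_insert_of_notMem (by simp [hbc])] at hk
      simp at hk
    · rintro ⟨a, ⟨ha, ha3⟩, rfl⟩
      have h0 := hne a ha
      refine ⟨rfl, ?_, ?_, ?_⟩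
      · simp
        field_simp
      · simp only [Multiset.insert_eq_cons, Multiset.mem_cons, Multiset.mem_singleton,
          forall_eq_or_imp, forall_eq]
        refine ⟨ha, ha, ?_⟩
        rw [inv_pow, mul_pow, ha]
        apply inv_eq_of_mul_eq_one_right
        rw [← hζ]
        ring
      · have : a ≠ (a * a)⁻¹ := by
          intro h
          apply ha3
          calc a ^ 3 = a * a * a := by ring
            _ = a * a * (a * a)⁻¹ := by rw [← h]
            _ = 1 := mul_inv_cancel₀ (mul_ne_zero h0 h0)
        simp only [Multiset.insert_eq_cons, Multiset.toFinset_cons, Multiset.toFinset_singleton]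
        rw [Finset.insert_eq_of_mem (by simp), Finset.card_pair this]
  rw [himg, Set.InjOn.ncard_image, Set.ncard_coe_finset]
  intro a ha b hb hab
  simp only [Finset.coe_filter, Set.mem_ofPred_eq, mem_rootSet hp] at ha hb
  have h0 := hne b hb.1
  by_contra hne'
  have h := congrArg (Multiset.count a) hab
  simp only [Multiset.insert_eq_cons, Multiset.count_cons, Multiset.count_singleton] at h
  simp only [if_true, if_neg hne', add_zero] at h
  split_ifs at h <;> omega

/-- Each set of three distinct eigenvalues with product `1` arises from six ordered pairs `(a, b)`,
the third eigenvalue being `(a * b)⁻¹`. -/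
lemma ncard_eigenMultisets_three {p : ℕ} (hp : 0 < p) {ζ : ℂ} (hζ : ζ ^ 3 = 1) :
    6 * (eigenMultisets p ζ 3).ncard = ((rootSet p ζ ×ˢ rootSet p ζ).filter fun x =>
      x.1 ≠ x.2 ∧ x.1 ≠ (x.1 * x.2)⁻¹ ∧ x.2 ≠ (x.1 * x.2)⁻¹).card := by
  classical
  have hne : ∀ a : ℂ, a ^ p = ζ → a ≠ 0 := fun a => ne_zero_of_pow_eq hp hζ
  set M : Finset (Finset ℂ) := ((rootSet p ζ).powersetCard 3).filter fun s => ∏ a ∈ s, a = 1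
    with hM
  have himg : eigenMultisets p ζ 3 = Set.image Finset.val (M : Set (Finset ℂ)) := by
    ext m
    simp only [Set.mem_image, Finset.mem_coe, hM, Finset.mem_filter, Finset.mem_powersetCard]
    constructor
    · rintro ⟨h3, hprod, hpow, hk⟩
      have hnd : m.Nodup := by
        rw [← Multiset.toFinset_card_eq_card_iff_nodup, hk, h3]
      refine ⟨⟨m, hnd⟩, ⟨⟨fun a ha => (mem_rootSet hp).2 (hpow a ha), h3⟩, ?_⟩, rfl⟩
      rw [Finset.prod_eq_multiset_prod, Multiset.map_id', hprod]
    · rintro ⟨s, ⟨⟨hs, h3⟩, hprod⟩, rfl⟩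
      refine ⟨h3, ?_, fun a ha => (mem_rootSet hp).1 (hs ha), ?_⟩
      · rw [← hprod, Finset.prod_eq_multiset_prod, Multiset.map_id']
      · rw [Finset.val_toFinset, h3]
  rw [himg, Set.ncard_image_of_injective _ Finset.val_injective, Set.ncard_coe_finset, mul_comm]
  symm
  have hmaps : Set.MapsTo (fun x : ℂ × ℂ => ({x.1, x.2, (x.1 * x.2)⁻¹} : Finset ℂ))
      ((rootSet p ζ ×ˢ rootSet p ζ).filter fun x =>
        x.1 ≠ x.2 ∧ x.1 ≠ (x.1 * x.2)⁻¹ ∧ x.2 ≠ (x.1 * x.2)⁻¹ : Finset (ℂ × ℂ)) M := by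
    rintro ⟨a, b⟩ hx
    simp only [Finset.mem_coe, Finset.mem_filter, Finset.mem_product] at hx
    obtain ⟨⟨ha, hb⟩, hab, hac, hbc⟩ := hx
    have h0 := mul_ne_zero (hne a ((mem_rootSet hp).1 ha)) (hne b ((mem_rootSet hp).1 hb))
    simp only [Finset.mem_coe, hM, Finset.mem_filter, Finset.mem_powersetCard]
    refine ⟨⟨?_, Finset.card_eq_three.2 ⟨_, _, _, hab, hac, hbc, rfl⟩⟩, ?_⟩
    · intro x hx
      simp only [Finset.mem_insert, Finset.mem_singleton] at hx
      rcases hx with rfl | rfl | rfl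
      · exact ha
      · exact hb
      · exact mem_rootSet_third hp hζ ha hb
    · rw [Finset.prod_insert
          (by rw [Finset.mem_insert, Finset.mem_singleton]; exact not_or.2 ⟨hab, hac⟩),
        Finset.prod_insert (by rw [Finset.mem_singleton]; exact hbc),
        Finset.prod_singleton, ← mul_assoc, mul_inv_cancel₀ h0]
  rw [Finset.card_eq_sum_card_fiberwise hmaps]
  apply Finset.sum_const_nat
  intro s hs
  simp only [hM, Finset.mem_filter, Finset.mem_powersetCard] at hs
  obtain ⟨⟨hsub, h3⟩, hprod⟩ := hs
  have hfib : (((rootSet p ζ ×ˢ rootSet p ζ).filter fun x =>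
      x.1 ≠ x.2 ∧ x.1 ≠ (x.1 * x.2)⁻¹ ∧ x.2 ≠ (x.1 * x.2)⁻¹).filter
        fun x => ({x.1, x.2, (x.1 * x.2)⁻¹} : Finset ℂ) = s) = s.offDiag := by
    ext ⟨a, b⟩
    simp only [Finset.mem_filter, Finset.mem_product, Finset.mem_offDiag]
    constructor
    · rintro ⟨⟨_, hab, _⟩, rfl⟩
      exact ⟨by simp, by simp, hab⟩
    · rintro ⟨ha, hb, hab⟩
      -- the third element of `s` is determined by the product condition
      have hcard : ((s.erase a).erase b).card = 1 := by
        rw [Finset.card_erase_of_mem (Finset.mem_erase.2 ⟨Ne.symm hab, hb⟩),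
          Finset.card_erase_of_mem ha, h3]
      obtain ⟨c, hc⟩ := Finset.card_eq_one.1 hcard
      have hcs : c ∈ (s.erase a).erase b := by simp [hc]
      simp only [Finset.mem_erase] at hcs
      have hs' : s = {a, b, c} := by
        rw [← Finset.insert_erase ha, ← Finset.insert_erase
          (Finset.mem_erase.2 ⟨Ne.symm hab, hb⟩), hc]
      rw [hs', Finset.prod_insert (by simp [hab, Ne.symm hcs.2.1]),
        Finset.prod_insert (by simpa using Ne.symm hcs.1), Finset.prod_singleton,
        ← mul_assoc] at hprod
      rw [inv_eq_of_mul_eq_one_right hprod]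
      exact ⟨⟨⟨hsub ha, hsub hb⟩, hab, Ne.symm hcs.2.1, Ne.symm hcs.1⟩, hs'.symm⟩
  rw [hfib, Finset.offDiag_card, h3]

/-- Inclusion–exclusion over the coincidences `a = b`, `a = c`, `b = c` with `c = (a * b)⁻¹`: each
holds for `p` pairs, and any two of them hold together exactly when `a = b` and `a ^ 3 = 1`. -/
lemma card_distinct_pairs {p : ℕ} (hp : 0 < p) {ζ : ℂ} (hζ : ζ ^ 3 = 1) :
    ((((rootSet p ζ ×ˢ rootSet p ζ).filter fun x =>
      x.1 ≠ x.2 ∧ x.1 ≠ (x.1 * x.2)⁻¹ ∧ x.2 ≠ (x.1 * x.2)⁻¹).card : ℕ) : ℤ)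
      = p * p - 3 * p + 2 * ((rootSet p ζ).filter fun a => a ^ 3 = 1).card := by
  classical
  set R := rootSet p ζ with hR
  have hcard : R.card = p := card_rootSet hp (by rintro rfl; simp at hζ)
  have hne : ∀ a ∈ R, a ≠ 0 := fun a ha => ne_zero_of_pow_eq hp hζ ((mem_rootSet hp).1 ha)
  have hthird : ∀ a ∈ R, (a * a)⁻¹ ∈ R := fun a ha => mem_rootSet_third hp hζ ha ha
  -- inclusion–exclusion for indicators, with `a = c` and `b = c` written as `b = a⁻²` and `a = b⁻²`
  have hpoint : ∀ x ∈ R ×ˢ R,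
      (if x.1 ≠ x.2 ∧ x.1 ≠ (x.1 * x.2)⁻¹ ∧ x.2 ≠ (x.1 * x.2)⁻¹ then (1 : ℤ) else 0)
        = 1 - (if x.2 = x.1 then 1 else 0) - (if x.2 = (x.1 * x.1)⁻¹ then 1 else 0)
          - (if x.1 = (x.2 * x.2)⁻¹ then 1 else 0)
          + 2 * (if x.2 = x.1 then (if x.1 ^ 3 = 1 then 1 else 0) else 0) := by
    rintro ⟨a, b⟩ hx
    obtain ⟨ha, hb⟩ := Finset.mem_product.1 hx
    have ha0 := hne a ha
    have hb0 := hne b hb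
    simp only at *
    have e1 : a = (a * b)⁻¹ ↔ b = (a * a)⁻¹ := by
      rw [eq_inv_iff_mul_eq_one_of_ne_zero (mul_ne_zero ha0 hb0),
        eq_inv_iff_mul_eq_one_of_ne_zero (mul_ne_zero ha0 ha0)]
      ring_nf
    have e2 : b = (a * b)⁻¹ ↔ a = (b * b)⁻¹ := by
      rw [eq_inv_iff_mul_eq_one_of_ne_zero (mul_ne_zero ha0 hb0),
        eq_inv_iff_mul_eq_one_of_ne_zero (mul_ne_zero hb0 hb0)]
      ring_nf
    have e3 : a = (a * a)⁻¹ ↔ a ^ 3 = 1 := by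
      rw [eq_inv_iff_mul_eq_one_of_ne_zero (mul_ne_zero ha0 ha0)]
      ring_nf
    simp only [ne_eq, e1, e2]
    by_cases hab : b = a
    · subst hab
      simp only [e3]
      split_ifs <;> first | (norm_num; done) | (exfalso; tauto)
    · have : ¬ (b = (a * a)⁻¹ ∧ a = (b * b)⁻¹) := by
        rintro ⟨h1, h2⟩
        rw [eq_inv_iff_mul_eq_one_of_ne_zero (mul_ne_zero ha0 ha0)] at h1
        rw [eq_inv_iff_mul_eq_one_of_ne_zero (mul_ne_zero hb0 hb0)] at h2
        apply hab
        apply mul_left_cancel₀ (mul_ne_zero ha0 hb0)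
        linear_combination h2 - h1
      have hab' : ¬ a = b := fun h => hab h.symm
      simp only [hab, hab', if_false, not_false_eq_true, true_and]
      split_ifs <;> first | (norm_num; done) | (exfalso; tauto)
  rw [Finset.card_filter]
  push_cast
  rw [Finset.sum_congr rfl hpoint]
  simp only [Finset.sum_add_distrib, Finset.sum_sub_distrib, ← Finset.mul_sum]
  have t1 : ∑ x ∈ R ×ˢ R, (1 : ℤ) = p * p := by
    simp [hcard]
  have t2 : ∑ x ∈ R ×ˢ R, (if x.2 = x.1 then (1 : ℤ) else 0) = p := by
    rw [Finset.sum_product]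
    simp [hcard]
  have t3 : ∑ x ∈ R ×ˢ R, (if x.2 = (x.1 * x.1)⁻¹ then (1 : ℤ) else 0) = p := by
    rw [Finset.sum_product]
    simp only [Finset.sum_ite_eq']
    rw [Finset.sum_congr rfl fun a ha => if_pos (hthird a ha)]
    simp [hcard]
  have t4 : ∑ x ∈ R ×ˢ R, (if x.1 = (x.2 * x.2)⁻¹ then (1 : ℤ) else 0) = p := by
    rw [Finset.sum_product_right]
    simp only [Finset.sum_ite_eq']
    rw [Finset.sum_congr rfl fun a ha => if_pos (hthird a ha)]
    simp [hcard]
  have t5 : ∑ x ∈ R ×ˢ R, (if x.2 = x.1 then (if x.1 ^ 3 = 1 then (1 : ℤ) else 0) else 0)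
      = (R.filter fun a => a ^ 3 = 1).card := by
    rw [Finset.sum_product, Finset.card_filter]
    push_cast
    refine Finset.sum_congr rfl fun a ha => ?_
    simp [ha]
  rw [t1, t2, t3, t4, t5]
  ring

/-! ### Summing over the cube roots of unity -/

lemma omega3_primitive : IsPrimitiveRoot omega3 3 := by
  have := Complex.isPrimitiveRoot_exp 3 (by norm_num)
  simpa [omega3] using this

/-- For `l < 3`, the number of cube roots of unity `ω ^ j` whose `p`-th power is `ω ^ l`, in terms of
the exponents modulo `3`. -/
def cubeCount (p l : ℕ) : ℕ := ((Finset.range 3).filter fun j => j * (p % 3) % 3 = l).card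

lemma card_filter_cube {p : ℕ} (hp : 0 < p) {l : ℕ} (hl : l < 3) :
    ((rootSet p (omega3 ^ l)).filter fun a => a ^ 3 = 1).card = cubeCount p l := by
  have himg : (rootSet p (omega3 ^ l)).filter (fun a => a ^ 3 = 1)
      = ((Finset.range 3).filter fun j => j * (p % 3) % 3 = l).image (omega3 ^ ·) := by
    have hiff : ∀ j : ℕ, (omega3 ^ j) ^ p = omega3 ^ l ↔ j * (p % 3) % 3 = l := by
      intro j
      rw [← pow_mul, pow_eq_pow_mod (j * p) omega3_primitive.pow_eq_one, Nat.mul_mod_mod]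
      exact ⟨fun h => omega3_primitive.pow_inj (Nat.mod_lt _ (by norm_num)) hl h,
        fun h => by rw [h]⟩
    ext a
    simp only [Finset.mem_filter, Finset.mem_image, Finset.mem_range, mem_rootSet hp]
    constructor
    · rintro ⟨ha, h3⟩
      obtain ⟨j, hj, rfl⟩ := omega3_primitive.eq_pow_of_pow_eq_one h3
      exact ⟨j, ⟨hj, (hiff j).1 ha⟩, rfl⟩
    · rintro ⟨j, ⟨hj, h⟩, rfl⟩
      refine ⟨(hiff j).2 h, ?_⟩
      rw [← pow_mul, mul_comm, pow_mul, omega3_primitive.pow_eq_one, one_pow]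
  rw [himg, Finset.card_image_of_injOn]
  · rfl
  · intro i hi j hj hij
    simp only [Finset.coe_filter, Finset.mem_range, Set.mem_ofPred_eq] at hi hj
    exact omega3_primitive.pow_inj hi.1 hj.1 hij

lemma omega3_pow_cube (l : ℕ) : (omega3 ^ l) ^ 3 = 1 := by
  rw [← pow_mul, mul_comm, pow_mul, omega3_primitive.pow_eq_one, one_pow]

lemma norm_omega3_pow (l : ℕ) : ‖omega3 ^ l‖ = 1 :=
  Complex.norm_eq_one_of_pow_eq_one (omega3_pow_cube l) (by norm_num)

lemma countTwo_eq {p : ℕ} (hp : 0 < p) {l : ℕ} (hl : l < 3) :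
    (countTwo p (omega3 ^ l) : ℤ) = p - cubeCount p l := by
  rw [countTwo, numConjClasses_eq hp (norm_omega3_pow l),
    ncard_eigenMultisets_two hp (omega3_pow_cube l), ← card_filter_cube hp hl]
  have h := Finset.card_filter_add_card_filter_not (s := rootSet p (omega3 ^ l))
    (fun a => a ^ 3 = 1)
  rw [card_rootSet hp (by rw [← norm_pos_iff, norm_omega3_pow]; norm_num)] at h
  simp only [ne_eq]
  omega

lemma six_mul_countThree_eq {p : ℕ} (hp : 0 < p) {l : ℕ} (hl : l < 3) :
    (6 * countThree p (omega3 ^ l) : ℤ) = p * p - 3 * p + 2 * cubeCount p l := by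
  rw [countThree, numConjClasses_eq hp (norm_omega3_pow l), ← card_filter_cube hp hl,
    ← card_distinct_pairs hp (omega3_pow_cube l),
    ← ncard_eigenMultisets_three hp (omega3_pow_cube l)]
  push_cast
  rfl

lemma cubeCount_of_not_dvd {p l : ℕ} (hl : l < 3) (h : ¬ 3 ∣ p) : cubeCount p l = 1 := by
  have h3 : p % 3 = 1 ∨ p % 3 = 2 := by omega
  unfold cubeCount
  rcases h3 with h3 | h3 <;> rw [h3] <;> interval_cases l <;> rfl

lemma cubeCount_sum (p : ℕ) : cubeCount p 0 + cubeCount p 1 + cubeCount p 2 = 3 := by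
  have h3 : p % 3 = 0 ∨ p % 3 = 1 ∨ p % 3 = 2 := by omega
  unfold cubeCount
  rcases h3 with h3 | h3 | h3 <;> rw [h3] <;> rfl

/-- The formula when `3 ∤ q`: then `cubeCount q` is constantly `1`, so the sum over `l` sees
`cubeCount p` only through its total, which is `3`. -/
lemma count_aux (p q : ℕ) (hp : 0 < p) (hq : 0 < q) (h : ¬ 3 ∣ q) :
    (2 : ℤ) * ∑ l ∈ Finset.range 3,
        (countThree p (omega3 ^ l) * countTwo q (omega3 ^ l)
          + countTwo p (omega3 ^ l) * countThree q (omega3 ^ l) : ℤ)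
      = ((p : ℤ) - 1) * ((q : ℤ) - 1) * ((p : ℤ) + (q : ℤ) - 4) := by
  have hs : (cubeCount p 0 : ℤ) + cubeCount p 1 + cubeCount p 2 = 3 := by
    exact_mod_cast cubeCount_sum p
  have hterm : ∀ l ∈ Finset.range 3,
      (6 * (countThree p (omega3 ^ l) * countTwo q (omega3 ^ l)
          + countTwo p (omega3 ^ l) * countThree q (omega3 ^ l)) : ℤ)
      = (p * p - 3 * p + 2 * cubeCount p l) * (q - 1)
        + (p - cubeCount p l) * (q * q - 3 * q + 2) := by
    intro l hl
    have hl := Finset.mem_range.1 hl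
    have h1 := six_mul_countThree_eq hp hl
    have h2 := six_mul_countThree_eq hq hl
    have h3 := countTwo_eq hp hl
    have h4 := countTwo_eq hq hl
    rw [cubeCount_of_not_dvd hl h] at h2 h4
    rw [h3, h4]
    push_cast at *
    linear_combination ((q : ℤ) - 1) * h1 + ((p : ℤ) - cubeCount p l) * h2
  have h6 : (6 : ℤ) ≠ 0 := by norm_num
  apply mul_left_cancel₀ h6
  rw [mul_left_comm, Finset.mul_sum, Finset.sum_congr rfl hterm]
  simp only [Finset.sum_range_succ, Finset.sum_range_zero]
  linear_combination (4 * ((q : ℤ) - 1) - 2 * (q * q - 3 * q + 2)) * hs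

/-- The number of two-dimensional (Type I) components of the irreducible
`SU(3)` representation variety of the knot complement `Z`:
`2·Σ_{ζ³=1} (f(p,ζ)·g(q,ζ) + g(p,ζ)·f(q,ζ)) = (p−1)(q−1)(p+q−4)`. -/
theorem count_typeI_components (p q : ℕ) (hp : 0 < p) (hq : 0 < q)
    (hpq : Nat.Coprime p q) :
    (2 : ℤ) * ∑ l ∈ Finset.range 3,
        (countThree p (omega3 ^ l) * countTwo q (omega3 ^ l)
          + countTwo p (omega3 ^ l) * countThree q (omega3 ^ l) : ℤ)
      = ((p : ℤ) - 1) * ((q : ℤ) - 1) * ((p : ℤ) + (q : ℤ) - 4) := by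
  by_cases h : 3 ∣ q
  · have h' : ¬ 3 ∣ p := fun h' => by
      have := Nat.dvd_gcd h' h
      rw [hpq] at this
      omega
    have key := count_aux q p hq hp h'
    have hcomm : ∀ l ∈ Finset.range 3,
        (countThree p (omega3 ^ l) * countTwo q (omega3 ^ l)
          + countTwo p (omega3 ^ l) * countThree q (omega3 ^ l) : ℤ)
        = countThree q (omega3 ^ l) * countTwo p (omega3 ^ l)
          + countTwo q (omega3 ^ l) * countThree p (omega3 ^ l) := fun l _ => by ring
    rw [Finset.sum_congr rfl hcomm, key]
    ring
  · exact count_aux p q hp hq h
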